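/- arXiv:2005.12505 — 2 statements merged into one kernel-verified Lean document; each statement's English description precedes it below -/
import Mathlib

section
/- Consider the consensus-voting group process on a convex compact set K ⊆ ℝ² with vol(K) = 1, and let f : K × K → [0,∞) be a measurable function satisfying f(w₁,w₂) ≤ min_{i∈{1,2}} vol(E_K(Hᵢ(w₁,w₂), H₍₃₋ᵢ₎(w₁,w₂))) for all w₁ ≠ w₂ in K. Define Φ(λ) = vol{(w₁,w₂) ∈ K × K : f(w₁,w₂) ≤ λ}, and assume Φ is absolutely continuous on [0,1]. Then there is a universal constant C > 0 such that for every t ≥ 2, Pr[X^{t+1}] ≤ C·( 1/t + ∫₀^{ln(t)/t} t·e^{−tλ}·Φ(λ) dλ ). -/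
open MeasureTheory Metric Set
open scoped RealInnerProductSpace

noncomputable section

/-- Points of the plane (with the Euclidean norm). -/
abbrev Pt : Type := EuclideanSpace ℝ (Fin 2)

/-- The Voronoi cell of `w₁` (against competitor `w₂`) inside `K`. -/
def vcell (K : Set Pt) (w₁ w₂ : Pt) : Set Pt := {v ∈ K | dist v w₁ ≤ dist v w₂}

/-- The acceptance event `E_K(H, A)`: the set of candidate pairs `(w₁, w₂) ∈ K × K` such
that some candidate `wᵢ` lies in `H` and `A` is contained in its Voronoi cell, i.e. a
candidate inside `H` is accepted when the convex hull of the group is `A`. -/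
def accEvent (K H A : Set Pt) : Set (Pt × Pt) :=
  {p | p.1 ∈ K ∧ p.2 ∈ K ∧
    ((p.1 ∈ H ∧ A ⊆ vcell K p.1 p.2) ∨ (p.2 ∈ H ∧ A ⊆ vcell K p.2 p.1))}

/-- Every group member weakly prefers candidate `w₁` to candidate `w₂`. -/
def Accepts (G : Set Pt) (w₁ w₂ : Pt) : Prop := ∀ v ∈ G, dist v w₁ ≤ dist v w₂

open Classical in
/-- One round of the consensus-voting process: given the current group `G` and a pair of
candidates `c = (w₁, w₂)`, the unanimously preferred candidate (if any) joins the group. -/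
def step (G : Set Pt) (c : Pt × Pt) : Set Pt :=
  if Accepts G c.1 c.2 then insert c.1 G
  else if Accepts G c.2 c.1 then insert c.2 G
  else G

/-- The group after `t` rounds, from initial members `init` and candidate pairs `c`. -/
def grp {k : ℕ} (init : Fin k → Pt) (c : ℕ → Pt × Pt) : ℕ → Set Pt
  | 0 => Set.range init
  | t + 1 => step (grp init c t) (c t)

/-- Extend a `Fin T`-indexed sequence of candidate pairs to an `ℕ`-indexed one. -/
def extSeq {T : ℕ} (c : Fin T → Pt × Pt) : ℕ → Pt × Pt :=
  fun n => if h : n < T then c ⟨n, h⟩ else 0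

/-- The law of the randomness driving the first `T` rounds of the process: `k` i.i.d.
initial members with law `μ`, and `T` i.i.d. candidate pairs, each pair being two i.i.d.
points with law `μ`. -/
def procMeasure (μ : Measure Pt) (k T : ℕ) :
    Measure ((Fin k → Pt) × (Fin T → Pt × Pt)) :=
  (Measure.pi fun _ => μ).prod (Measure.pi fun _ => μ.prod μ)


/-- Good witnesses: `(v, w, p)` with `p` in the acceptance event into the cell of `w.2`
given the cell of `w.1`, no ties. -/
def goodSet (K : Set Pt) : Set (Pt × (Pt × Pt) × (Pt × Pt)) :=
  {x | x.2.2 ∈ accEvent K (vcell K x.2.1.2 x.2.1.1) (vcell K x.2.1.1 x.2.1.2) ∧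
    dist x.2.2.1 x.2.1.1 ≠ dist x.2.2.1 x.2.1.2 ∧
    dist x.2.2.2 x.2.1.1 ≠ dist x.2.2.2 x.2.1.2 ∧
    dist x.1 x.2.2.1 ≠ dist x.1 x.2.2.2}

lemma sub_step (G : Set Pt) (c : Pt × Pt) : G ⊆ step G c := by
  unfold step
  split_ifs
  · exact subset_insert _ _
  · exact subset_insert _ _
  · exact Subset.rfl

lemma grp_mono {k : ℕ} (init : Fin k → Pt) (c : ℕ → Pt × Pt) : Monotone (grp init c) :=
  monotone_nat_of_le_succ fun _ => sub_step _ _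

lemma grp_sub {k : ℕ} (K : Set Pt) (init : Fin k → Pt) (c : ℕ → Pt × Pt)
    (hi : ∀ i, init i ∈ K) (t : ℕ) (hc : ∀ s < t, (c s).1 ∈ K ∧ (c s).2 ∈ K) :
    grp init c t ⊆ K := by
  induction t with
  | zero => rintro _ ⟨i, rfl⟩; exact hi i
  | succ n ih =>
    have h1 := ih fun s hs => hc s (by omega)
    have h2 := hc n (by omega)
    change step (grp init c n) (c n) ⊆ K
    unfold step
    split_ifs
    · exact insert_subset h2.1 h1
    · exact insert_subset h2.2 h1
    · exact h1

lemma process_key {k : ℕ} (K : Set Pt) (init : Fin k → Pt) (c : ℕ → Pt × Pt)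
    (hi : ∀ i, init i ∈ K) (t : ℕ) (hc : ∀ s < t, (c s).1 ∈ K ∧ (c s).2 ∈ K)
    (w : Pt × Pt) (hw : Accepts (grp init c t) w.1 w.2) (i : Fin k) (s : ℕ) (hs : s < t) :
    (init i, w, c s) ∉ goodSet K := by
  rintro ⟨⟨-, -, h⟩, n1, n2, n3⟩
  have hsub : grp init c s ⊆ vcell K w.1 w.2 := fun v hv =>
    ⟨grp_sub K init c hi s (fun r hr => hc r (by omega)) hv, hw v (grp_mono init c hs.le hv)⟩
  have hst : step (grp init c s) (c s) ⊆ grp init c t := grp_mono init c (Nat.succ_le_of_lt hs)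
  have hi0 : init i ∈ grp init c s := grp_mono init c (Nat.zero_le s) ⟨i, rfl⟩
  rcases h with ⟨h1, h2⟩ | ⟨h1, h2⟩
  · have ha : Accepts (grp init c s) (c s).1 (c s).2 := fun v hv => (h2 (hsub hv)).2
    have : (c s).1 ∈ grp init c t := hst (by rw [step, if_pos ha]; exact mem_insert _ _)
    exact n1 (le_antisymm (hw _ this) h1.2)
  · have ha : Accepts (grp init c s) (c s).2 (c s).1 := fun v hv => (h2 (hsub hv)).2
    have hb : ¬ Accepts (grp init c s) (c s).1 (c s).2 := fun hb =>
      n3 (le_antisymm (hb _ hi0) (ha _ hi0))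
    have : (c s).2 ∈ grp init c t :=
      hst (by rw [step, if_neg hb, if_pos ha]; exact mem_insert _ _)
    exact n2 (le_antisymm (hw _ this) h1.2)

lemma meas_sub {K : Set Pt} (hK : IsCompact K) :
    MeasurableSet {x : (Pt × Pt) × (Pt × Pt) | vcell K x.1.1 x.1.2 ⊆ vcell K x.2.1 x.2.2} := by
  have : CompactSpace K := isCompact_iff_compactSpace.1 hK
  have hcl : ∀ n : ℕ, IsClosed (Prod.snd '' {y : K × ((Pt × Pt) × (Pt × Pt)) |
      dist (y.1 : Pt) y.2.1.1 ≤ dist (y.1 : Pt) y.2.1.2 ∧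
      dist (y.1 : Pt) y.2.2.2 + 1 / ((n : ℝ) + 1) ≤ dist (y.1 : Pt) y.2.2.1}) := by
    intro n
    apply isClosedMap_snd_of_compactSpace
    have c1 : IsClosed {y : K × ((Pt × Pt) × (Pt × Pt)) |
      dist (y.1 : Pt) y.2.1.1 ≤ dist (y.1 : Pt) y.2.1.2} :=
      isClosed_le (by fun_prop) (by fun_prop)
    have c2 : IsClosed {y : K × ((Pt × Pt) × (Pt × Pt)) |
      dist (y.1 : Pt) y.2.2.2 + 1 / ((n : ℝ) + 1) ≤ dist (y.1 : Pt) y.2.2.1} :=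
      isClosed_le (by fun_prop) (by fun_prop)
    exact c1.inter c2
  have := (MeasurableSet.iUnion fun n => (hcl n).measurableSet).compl
  convert this using 1
  ext x
  simp only [mem_ofPred_eq, mem_compl_iff, mem_iUnion, mem_image, not_exists]
  constructor
  · rintro h n ⟨v, y⟩ ⟨⟨h1, h2⟩, rfl⟩
    have h3 := (h ⟨v.2, h1⟩).2
    have : (0 : ℝ) < 1 / ((n : ℝ) + 1) := by positivity
    simp only at h2 h3
    linarith
  · rintro h v ⟨hv, hv1⟩
    refine ⟨hv, ?_⟩
    by_contra hlt
    push Not at hlt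
    obtain ⟨n, hn⟩ := exists_nat_one_div_lt (sub_pos.2 hlt)
    exact h n (⟨v, hv⟩, x) ⟨⟨hv1, by simp only; linarith⟩, rfl⟩

lemma meas_vcell {K : Set Pt} (hK : IsCompact K) :
    MeasurableSet {x : Pt × (Pt × Pt) | x.1 ∈ vcell K x.2.1 x.2.2} := by
  apply IsClosed.measurableSet
  have c1 : IsClosed {x : Pt × (Pt × Pt) | dist x.1 x.2.1 ≤ dist x.1 x.2.2} :=
    isClosed_le (by fun_prop) (by fun_prop)
  exact (hK.isClosed.preimage continuous_fst).inter c1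

lemma meas_acc {K : Set Pt} (hK : IsCompact K) :
    MeasurableSet {x : (Pt × Pt) × (Pt × Pt) |
      x.2 ∈ accEvent K (vcell K x.1.2 x.1.1) (vcell K x.1.1 x.1.2)} := by
  have hKm := hK.isClosed.measurableSet
  have m1 : MeasurableSet {x : (Pt × Pt) × (Pt × Pt) | x.2.1 ∈ K} :=
    hKm.preimage (by fun_prop)
  have m2 : MeasurableSet {x : (Pt × Pt) × (Pt × Pt) | x.2.2 ∈ K} :=
    hKm.preimage (by fun_prop)
  have m3 : MeasurableSet {x : (Pt × Pt) × (Pt × Pt) | x.2.1 ∈ vcell K x.1.2 x.1.1} :=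
    (meas_vcell hK).preimage (f := fun x : (Pt × Pt) × (Pt × Pt) => (x.2.1, (x.1.2, x.1.1)))
      (by fun_prop)
  have m4 : MeasurableSet {x : (Pt × Pt) × (Pt × Pt) | x.2.2 ∈ vcell K x.1.2 x.1.1} :=
    (meas_vcell hK).preimage (f := fun x : (Pt × Pt) × (Pt × Pt) => (x.2.2, (x.1.2, x.1.1)))
      (by fun_prop)
  have m5 := meas_sub hK
  have m6 : MeasurableSet {x : (Pt × Pt) × (Pt × Pt) |
      vcell K x.1.1 x.1.2 ⊆ vcell K x.2.2 x.2.1} :=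
    (meas_sub hK).preimage (f := fun x : (Pt × Pt) × (Pt × Pt) => (x.1, (x.2.2, x.2.1)))
      (by fun_prop)
  exact m1.inter (m2.inter ((m3.inter m5).union (m4.inter m6)))

lemma meas_good {K : Set Pt} (hK : IsCompact K) : MeasurableSet (goodSet K) := by
  have m1 := (meas_acc hK).preimage
    (f := fun x : Pt × (Pt × Pt) × (Pt × Pt) => x.2) (by fun_prop)
  refine m1.inter (MeasurableSet.inter ?_ (MeasurableSet.inter ?_ ?_))
  · exact (isClosed_eq (f := fun x : Pt × (Pt × Pt) × (Pt × Pt) => dist x.2.2.1 x.2.1.1)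
      (g := fun x : Pt × (Pt × Pt) × (Pt × Pt) => dist x.2.2.1 x.2.1.2) (by fun_prop) (by fun_prop)).measurableSet.compl
  · exact (isClosed_eq (f := fun x : Pt × (Pt × Pt) × (Pt × Pt) => dist x.2.2.2 x.2.1.1)
      (g := fun x : Pt × (Pt × Pt) × (Pt × Pt) => dist x.2.2.2 x.2.1.2) (by fun_prop) (by fun_prop)).measurableSet.compl
  · exact (isClosed_eq (f := fun x : Pt × (Pt × Pt) × (Pt × Pt) => dist x.1 x.2.2.1)
      (g := fun x : Pt × (Pt × Pt) × (Pt × Pt) => dist x.1 x.2.2.2) (by fun_prop) (by fun_prop)).measurableSet.compl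

lemma bisector_null {a b : Pt} (hab : a ≠ b) : volume {v : Pt | dist v a = dist v b} = 0 := by
  have h : ({v : Pt | dist v a = dist v b} : Set Pt) = AffineSubspace.perpBisector a b := by
    ext v; simp [AffineSubspace.mem_perpBisector_iff_dist_eq]
  rw [h]
  apply Measure.addHaar_affineSubspace
  simpa [AffineSubspace.perpBisector_eq_top] using hab

lemma sphere_null (v b : Pt) : volume {a : Pt | dist v a = dist v b} = 0 := by
  have h : ({a : Pt | dist v a = dist v b} : Set Pt) = sphere v (dist v b) := by
    ext a; rw [mem_sphere, dist_comm a v]; rfl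
  rw [h]
  exact Measure.addHaar_sphere _ _ _

lemma ae_tie (v : Pt) {a b : Pt} (hab : a ≠ b) :
    ∀ᵐ p : Pt × Pt, dist p.1 a ≠ dist p.1 b ∧ dist p.2 a ≠ dist p.2 b ∧
      dist v p.1 ≠ dist v p.2 := by
  have h0 : ∀ᵐ x : Pt, dist x a ≠ dist x b := by
    rw [ae_iff]; simpa using bisector_null hab
  have h1 : ∀ᵐ p : Pt × Pt, dist p.1 a ≠ dist p.1 b :=
    Measure.quasiMeasurePreserving_fst.ae h0
  have h2 : ∀ᵐ p : Pt × Pt, dist p.2 a ≠ dist p.2 b :=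
    Measure.quasiMeasurePreserving_snd.ae h0
  have h3 : ∀ᵐ p : Pt × Pt, dist v p.1 ≠ dist v p.2 := by
    rw [ae_iff]
    simp only [ne_eq, not_not]
    rw [Measure.volume_eq_prod, Measure.measure_prod_null]
    · refine Filter.Eventually.of_forall fun x => ?_
      have := sphere_null v x
      simpa [preimage, eq_comm] using this
    · exact (isClosed_eq (by fun_prop) (by fun_prop)).measurableSet
  filter_upwards [h1, h2, h3] with p a b c using ⟨a, b, c⟩

lemma diag_null : ∀ᵐ p : Pt × Pt, p.1 ≠ p.2 := by
  rw [ae_iff]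
  simp only [ne_eq, not_not]
  rw [Measure.volume_eq_prod, Measure.measure_prod_null]
  · refine Filter.Eventually.of_forall fun x => ?_
    have : Prod.mk x ⁻¹' {p : Pt × Pt | p.1 = p.2} = {x} := by ext; simp [eq_comm]
    simp [this]
  · exact (isClosed_eq (by fun_prop) (by fun_prop)).measurableSet

lemma fiber_bound {K : Set Pt} (hK : IsCompact K) (hv : volume K = 1) (v : Pt) (w : Pt × Pt)
    (hne : w.1 ≠ w.2) (r : ℝ)
    (hr : ENNReal.ofReal r ≤ volume (accEvent K (vcell K w.2 w.1) (vcell K w.1 w.2))) (t : ℕ) :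
    Measure.pi (fun _ : Fin t => (volume.restrict K).prod (volume.restrict K))
      {c | ∀ s, (v, w, c s) ∉ goodSet K} ≤ ENNReal.ofReal (Real.exp (-(t : ℝ) * r)) := by
  have : IsProbabilityMeasure (volume.restrict K) := ⟨by simp [hv]⟩
  set D : Set (Pt × Pt) := {p | (v, w, p) ∈ goodSet K} with hD
  have hDm : MeasurableSet D := (meas_good hK).preimage (by fun_prop)
  have h1 : {c : Fin t → Pt × Pt | ∀ s, (v, w, c s) ∉ goodSet K} =
      Set.pi univ fun _ => Dᶜ := by ext c; simp [hD]
  rw [h1, Measure.pi_pi, Finset.prod_const, Finset.card_univ, Fintype.card_fin]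
  have hvol : (volume.restrict K).prod (volume.restrict K) D =
      volume (accEvent K (vcell K w.2 w.1) (vcell K w.1 w.2)) := by
    rw [Measure.prod_restrict, Measure.restrict_apply hDm, ← Measure.volume_eq_prod]
    apply measure_congr
    filter_upwards [ae_tie v hne] with p hp
    apply propext
    constructor
    · rintro ⟨h, -⟩; exact h.1
    · intro h
      exact ⟨⟨h, hp⟩, h.1, h.2.1⟩
  have h2 : (volume.restrict K).prod (volume.restrict K) Dᶜ ≤
      ENNReal.ofReal (Real.exp (-r)) := by
    rw [prob_compl_eq_one_sub hDm, hvol]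
    calc _ ≤ 1 - ENNReal.ofReal r := tsub_le_tsub_left hr _
      _ ≤ ENNReal.ofReal (Real.exp (-r)) := by
        rw [tsub_le_iff_right, ← ENNReal.ofReal_one]
        calc ENNReal.ofReal 1 ≤ ENNReal.ofReal (Real.exp (-r) + r) := by
              apply ENNReal.ofReal_le_ofReal
              linarith [Real.add_one_le_exp (-r)]
          _ ≤ _ := ENNReal.ofReal_add_le
  calc _ ≤ (ENNReal.ofReal (Real.exp (-r))) ^ t := by gcongr
    _ = _ := by
      rw [← ENNReal.ofReal_pow (Real.exp_nonneg _), ← Real.exp_nat_mul]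
      congr 2; ring

lemma T_bound {K : Set Pt} (hK : IsCompact K) (hv : volume K = 1) (f : Pt × Pt → ℝ)
    (g : Pt × Pt → Pt × Pt) (hg : Measurable g)
    (hgne : ∀ w : Pt × Pt, w.1 ≠ w.2 → (g w).1 ≠ (g w).2)
    (hf : ∀ w : Pt × Pt, w.1 ∈ K → w.2 ∈ K → w.1 ≠ w.2 → ENNReal.ofReal (f w) ≤
      volume (accEvent K (vcell K (g w).2 (g w).1) (vcell K (g w).1 (g w).2)))
    (k t : ℕ) (i : Fin k) :
    (Measure.pi fun _ : Fin k => volume.restrict K).prod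
      (((volume.restrict K).prod (volume.restrict K)).prod
        (Measure.pi fun _ : Fin t => (volume.restrict K).prod (volume.restrict K)))
      {x | ∀ s, (x.1 i, g x.2.1, x.2.2 s) ∉ goodSet K} ≤
      ∫⁻ w in K ×ˢ K, ENNReal.ofReal (Real.exp (-(t : ℝ) * f w)) := by
  have : IsProbabilityMeasure (volume.restrict K) := ⟨by simp [hv]⟩
  have hm : MeasurableSet {x : (Fin k → Pt) × ((Pt × Pt) × (Fin t → Pt × Pt)) |
      ∀ s, (x.1 i, g x.2.1, x.2.2 s) ∉ goodSet K} := by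
    rw [ofPred_forall]
    refine MeasurableSet.iInter fun s => ?_
    exact (meas_good hK).compl.preimage (f := fun x : (Fin k → Pt) × ((Pt × Pt) ×
      (Fin t → Pt × Pt)) => (x.1 i, g x.2.1, x.2.2 s)) (by fun_prop)
  rw [Measure.prod_apply hm]
  have : ∀ v : Fin k → Pt, (((volume.restrict K).prod (volume.restrict K)).prod
        (Measure.pi fun _ : Fin t => (volume.restrict K).prod (volume.restrict K)))
      (Prod.mk v ⁻¹' {x | ∀ s, (x.1 i, g x.2.1, x.2.2 s) ∉ goodSet K}) ≤
      ∫⁻ w in K ×ˢ K, ENNReal.ofReal (Real.exp (-(t : ℝ) * f w)) := by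
    intro v
    rw [Measure.prod_apply (hm.preimage measurable_prodMk_left)]
    have hKm := hK.isClosed.measurableSet
    rw [Measure.prod_restrict, ← Measure.volume_eq_prod]
    apply lintegral_mono_ae
    filter_upwards [ae_restrict_mem (hKm.prod hKm), ae_restrict_of_ae diag_null] with w hw hne
    have := fiber_bound hK hv (v i) (g w) (hgne w hne) (f w) (hf w hw.1 hw.2 hne) t
    rw [Measure.prod_restrict, ← Measure.volume_eq_prod] at this
    exact this
  calc _ ≤ ∫⁻ _ : Fin k → Pt, (∫⁻ w in K ×ˢ K, ENNReal.ofReal (Real.exp (-(t : ℝ) * f w)))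
        ∂(Measure.pi fun _ : Fin k => volume.restrict K) := lintegral_mono this
    _ = _ := by simp

lemma proc_bound {K : Set Pt} (hK : IsCompact K) (hv : volume K = 1) (f : Pt × Pt → ℝ)
    (hf : ∀ w₁ ∈ K, ∀ w₂ ∈ K, w₁ ≠ w₂ →
        ENNReal.ofReal (f (w₁, w₂)) ≤
            volume (accEvent K (vcell K w₁ w₂) (vcell K w₂ w₁)) ∧
          ENNReal.ofReal (f (w₁, w₂)) ≤
            volume (accEvent K (vcell K w₂ w₁) (vcell K w₁ w₂)))
    (k : ℕ) (hk : 1 ≤ k) (t : ℕ) :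
    procMeasure (volume.restrict K) k (t + 1)
          {ω | Accepts (grp ω.1 (extSeq ω.2) t) (extSeq ω.2 t).1 (extSeq ω.2 t).2 ∨
               Accepts (grp ω.1 (extSeq ω.2) t) (extSeq ω.2 t).2 (extSeq ω.2 t).1}
      ≤ 2 * ∫⁻ w in K ×ˢ K, ENNReal.ofReal (Real.exp (-(t : ℝ) * f w)) := by
  have : IsProbabilityMeasure (volume.restrict K) := ⟨by simp [hv]⟩
  have hKm := hK.isClosed.measurableSet
  let i : Fin k := ⟨0, hk⟩
  let T : (Pt × Pt → Pt × Pt) → Set ((Fin k → Pt) × ((Pt × Pt) × (Fin t → Pt × Pt))) :=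
    fun g => {x | ∀ s, (x.1 i, g x.2.1, x.2.2 s) ∉ goodSet K}
  have b1 := T_bound hK hv f id measurable_id (fun w h => h)
    (fun w h1 h2 h => (hf w.1 h1 w.2 h2 h).2) k t i
  have b2 := T_bound hK hv f Prod.swap measurable_swap (fun w h => h.symm)
    (fun w h1 h2 h => (hf w.1 h1 w.2 h2 h).1) k t i
  let e := MeasurableEquiv.piFinSuccAbove (fun _ : Fin (t + 1) => Pt × Pt) (Fin.last t)
  have mp : MeasurePreserving (Prod.map id e)
      (procMeasure (volume.restrict K) k (t + 1))
      ((Measure.pi fun _ : Fin k => volume.restrict K).prod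
      (((volume.restrict K).prod (volume.restrict K)).prod
        (Measure.pi fun _ : Fin t => (volume.restrict K).prod (volume.restrict K)))) :=
    (MeasurePreserving.id _).prod (measurePreserving_piFinSuccAbove
      (fun _ : Fin (t + 1) => (volume.restrict K).prod (volume.restrict K)) (Fin.last t))
  have a0 : ∀ᵐ x ∂(volume.restrict K), x ∈ K := ae_restrict_mem hKm
  have a1 : ∀ᵐ x ∂(Measure.pi fun _ : Fin k => volume.restrict K), ∀ j, x j ∈ K :=
    ae_all_iff.2 fun j => (Measure.quasiMeasurePreserving_eval _ j).ae a0
  have a2 : ∀ᵐ p ∂((volume.restrict K).prod (volume.restrict K)), p.1 ∈ K ∧ p.2 ∈ K :=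
    (Measure.quasiMeasurePreserving_fst.ae a0).and (Measure.quasiMeasurePreserving_snd.ae a0)
  have a3 : ∀ᵐ x ∂(Measure.pi fun _ : Fin (t + 1) =>
      (volume.restrict K).prod (volume.restrict K)), ∀ j, (x j).1 ∈ K ∧ (x j).2 ∈ K :=
    ae_all_iff.2 fun j => (Measure.quasiMeasurePreserving_eval
      (fun _ : Fin (t + 1) => (volume.restrict K).prod (volume.restrict K)) j).ae a2
  have a4 : ∀ᵐ ω ∂(procMeasure (volume.restrict K) k (t + 1)),
      (∀ j, ω.1 j ∈ K) ∧ ∀ j, (ω.2 j).1 ∈ K ∧ (ω.2 j).2 ∈ K :=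
    (Measure.quasiMeasurePreserving_fst.ae a1).and (Measure.quasiMeasurePreserving_snd.ae a3)
  calc _ ≤ procMeasure (volume.restrict K) k (t + 1)
        (Prod.map id e ⁻¹' (T id ∪ T Prod.swap)) := by
        apply measure_mono_ae
        filter_upwards [a4] with ω hω hacc
        have hlast : extSeq ω.2 t = ω.2 (Fin.last t) := by simp [extSeq, Fin.last]
        have hs : ∀ s : Fin t, extSeq ω.2 s = ω.2 s.castSucc := by
          intro s
          have := s.2
          simp [extSeq, Fin.castSucc, Fin.castAdd, Fin.castLE, show (s : ℕ) < t + 1 by omega]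
        have hc : ∀ s < t, (extSeq ω.2 s).1 ∈ K ∧ (extSeq ω.2 s).2 ∈ K := by
          intro s h
          have := hs ⟨s, h⟩
          simp only at this
          rw [this]; exact hω.2 _
        have he1 : (e ω.2).1 = ω.2 (Fin.last t) := rfl
        have he2 : ∀ s, (e ω.2).2 s = ω.2 s.castSucc := by
          intro s
          simp [e, MeasurableEquiv.piFinSuccAbove, Fin.init]
        rcases hacc with h | h
        · left
          intro s
          have := process_key K ω.1 (extSeq ω.2) hω.1 t hc (extSeq ω.2 t) h i s s.2
          simpa [he1, he2, ← hs, ← hlast] using this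
        · right
          intro s
          have := process_key K ω.1 (extSeq ω.2) hω.1 t hc (extSeq ω.2 t).swap h i s s.2
          simpa [he1, he2, ← hs, ← hlast] using this
    _ ≤ ((Measure.pi fun _ : Fin k => volume.restrict K).prod
      (((volume.restrict K).prod (volume.restrict K)).prod
        (Measure.pi fun _ : Fin t => (volume.restrict K).prod (volume.restrict K))))
        (T id ∪ T Prod.swap) := by
        have : MeasurableEmbedding (Prod.map (id : (Fin k → Pt) → _) e) :=
          MeasurableEmbedding.id.prodMap e.measurableEmbedding
        rw [mp.measure_preimage_emb this]
    _ ≤ _ := by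
        rw [two_mul]
        exact (measure_union_le _ _).trans (add_le_add b1 b2)

lemma exp_layer (t : ℕ) (ht : 2 ≤ t) (r : ℝ) (hr : 0 ≤ r) :
    ENNReal.ofReal (Real.exp (-(t : ℝ) * r)) ≤ ENNReal.ofReal (1 / t) +
      ∫⁻ lam in Ioc 0 (Real.log t / t), ENNReal.ofReal (t * Real.exp (-(t : ℝ) * lam)) *
        (Ici r).indicator 1 lam := by
  have ht0 : (0 : ℝ) < t := by positivity
  set L := Real.log t / t with hL
  have hexpL : Real.exp (-(t : ℝ) * L) = 1 / t := by
    rw [hL, show -(t : ℝ) * (Real.log t / t) = -Real.log t by field_simp, Real.exp_neg,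
      Real.exp_log ht0, one_div]
  rcases le_total L r with h | h
  · refine le_add_right (ENNReal.ofReal_le_ofReal ?_)
    rw [← hexpL]
    apply Real.exp_le_exp.2
    nlinarith
  · have hint : ∫ lam in r..L, t * Real.exp (-(t : ℝ) * lam) =
        Real.exp (-(t : ℝ) * r) - 1 / t := by
      rw [← hexpL]
      have := intervalIntegral.integral_eq_sub_of_hasDerivAt (a := r) (b := L)
        (f := fun x => -Real.exp (-(t : ℝ) * x))
        (f' := fun x => t * Real.exp (-(t : ℝ) * x)) (fun x _ => by
          have h1 : HasDerivAt (fun x : ℝ => -(t : ℝ) * x) (-(t : ℝ)) x := by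
            simpa using (hasDerivAt_id x).const_mul (-(t : ℝ))
          have h2 := h1.exp.neg
          rw [show -(Real.exp (-(t : ℝ) * x) * -(t : ℝ)) = t * Real.exp (-(t : ℝ) * x) by ring]
            at h2
          exact h2) (Continuous.intervalIntegrable (by fun_prop) _ _)
      rw [this]; ring
    have h2 : ENNReal.ofReal (∫ lam in r..L, t * Real.exp (-(t : ℝ) * lam)) =
        ∫⁻ lam in Ioc r L, ENNReal.ofReal (t * Real.exp (-(t : ℝ) * lam)) := by
      rw [intervalIntegral.integral_of_le h, ofReal_integral_eq_lintegral_ofReal]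
      · exact (Continuous.intervalIntegrable (by fun_prop) r L).1
      · exact Filter.Eventually.of_forall fun x => by positivity
    calc _ = ENNReal.ofReal (1 / t + (Real.exp (-(t : ℝ) * r) - 1 / t)) := by congr 1; ring
      _ ≤ ENNReal.ofReal (1 / t) + ENNReal.ofReal (Real.exp (-(t : ℝ) * r) - 1 / t) :=
        ENNReal.ofReal_add_le
      _ ≤ _ := by
        rw [← hint, h2]
        refine add_le_add le_rfl ?_
        calc _ = ∫⁻ lam in Ioc r L, ENNReal.ofReal (t * Real.exp (-(t : ℝ) * lam)) *
              (Ici r).indicator 1 lam := by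
              apply setLIntegral_congr_fun measurableSet_Ioc
              intro x hx
              simp [indicator, hx.1.le]
          _ ≤ _ := lintegral_mono_set (Ioc_subset_Ioc_left hr)

lemma layer {K : Set Pt} (hK : IsCompact K) (hv : volume K = 1) (f : Pt × Pt → ℝ)
    (hfm : Measurable f) (hf0 : ∀ p, 0 ≤ f p) (Φ : ℝ → ℝ)
    (hΦ : ∀ lam : ℝ,
          Φ lam = (volume {p : Pt × Pt | p.1 ∈ K ∧ p.2 ∈ K ∧ f p ≤ lam}).toReal)
    (t : ℕ) (ht : 2 ≤ t) :
    ∫⁻ w in K ×ˢ K, ENNReal.ofReal (Real.exp (-(t : ℝ) * f w)) ≤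
      ENNReal.ofReal (1 / t +
            ∫ lam in (0 : ℝ)..(Real.log t / t),
              t * Real.exp (-(t : ℝ) * lam) * Φ lam) := by
  have hKm := hK.isClosed.measurableSet
  have hKK : volume (K ×ˢ K) = 1 := by
    rw [Measure.volume_eq_prod, Measure.prod_prod, hv, one_mul]
  have : IsProbabilityMeasure ((volume : Measure (Pt × Pt)).restrict (K ×ˢ K)) :=
    ⟨by simp [hKK]⟩
  have hset : ∀ lam, volume {p : Pt × Pt | p.1 ∈ K ∧ p.2 ∈ K ∧ f p ≤ lam} =
      volume.restrict (K ×ˢ K) {p | f p ≤ lam} := by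
    intro lam
    rw [Measure.restrict_apply (measurableSet_le hfm measurable_const)]
    congr 1
    ext p
    simp only [mem_ofPred_eq, mem_inter_iff, mem_prod]
    tauto
  have hΦm : Monotone Φ := by
    intro a b hab
    rw [hΦ, hΦ, hset, hset]
    apply ENNReal.toReal_mono (measure_ne_top _ _)
    exact measure_mono fun p (hp : f p ≤ a) => hp.trans hab
  have hΦ0 : ∀ x, 0 ≤ Φ x := fun x => by rw [hΦ]; exact ENNReal.toReal_nonneg
  have hL : 0 ≤ Real.log t / t := by positivity
  set L := Real.log t / t
  have hint0 : 0 ≤ ∫ lam in (0 : ℝ)..L, t * Real.exp (-(t : ℝ) * lam) * Φ lam :=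
    intervalIntegral.integral_nonneg hL fun x _ =>
      mul_nonneg (by positivity) (hΦ0 x)
  rw [ENNReal.ofReal_add (by positivity) hint0]
  calc _ ≤ ∫⁻ w in K ×ˢ K, (ENNReal.ofReal (1 / t) +
      ∫⁻ lam in Ioc 0 L, ENNReal.ofReal (t * Real.exp (-(t : ℝ) * lam)) *
        (Ici (f w)).indicator 1 lam) := lintegral_mono fun w => exp_layer t ht (f w) (hf0 w)
    _ = ENNReal.ofReal (1 / t) + ∫⁻ w in K ×ˢ K, 
      ∫⁻ lam in Ioc 0 L, ENNReal.ofReal (t * Real.exp (-(t : ℝ) * lam)) *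
        (Ici (f w)).indicator 1 lam := by
        rw [lintegral_add_left measurable_const]; simp
    _ = ENNReal.ofReal (1 / t) + ∫⁻ lam in Ioc 0 L, ∫⁻ w in K ×ˢ K, 
        ENNReal.ofReal (t * Real.exp (-(t : ℝ) * lam)) * (Ici (f w)).indicator 1 lam := by
        rw [lintegral_lintegral_swap]
        apply Measurable.aemeasurable
        apply Measurable.mul
        · fun_prop
        · have : MeasurableSet {q : (Pt × Pt) × ℝ | f q.1 ≤ q.2} :=
            measurableSet_le (by fun_prop) (by fun_prop)
          exact (measurable_one (α := ENNReal)).indicator this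
    _ = _ := by
        congr 1
        rw [intervalIntegral.integral_of_le hL, ofReal_integral_eq_lintegral_ofReal]
        · apply lintegral_congr
          intro lam
          rw [ENNReal.ofReal_mul (p := t * Real.exp (-(t : ℝ) * lam)) (by positivity),
            lintegral_const_mul']
          · congr 1
            rw [hΦ, hset, ENNReal.ofReal_toReal (measure_ne_top _ _)]
            rw [← lintegral_indicator_one (measurableSet_le hfm measurable_const)]
            rfl
          · exact ENNReal.ofReal_ne_top
        · have := (hΦm.monotoneOn (uIcc 0 L)).intervalIntegrable (μ := volume)
          exact (this.continuousOn_mul (g := fun lam => t * Real.exp (-(t : ℝ) * lam))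
            (by fun_prop)).1
        · exact Filter.Eventually.of_forall fun x => mul_nonneg (by positivity) (hΦ0 x)

/-- With `f` as in Statement 3 and
`Φ(λ) = vol {(w₁,w₂) ∈ K × K : f (w₁,w₂) ≤ λ}` absolutely continuous on `[0,1]`
(i.e. an indefinite integral of an integrable density there), there is a universal
constant `C > 0` with
`Pr[X^{t+1}] ≤ C (1/t + ∫₀^{ln t / t} t e^{−tλ} Φ(λ) dλ)` for every `t ≥ 2`. -/
theorem prob_accept_le_integral_Phi :
    ∃ C : ℝ, 0 < C ∧
      ∀ (K : Set Pt), Convex ℝ K → IsCompact K → volume K = 1 →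
      ∀ (f : Pt × Pt → ℝ), Measurable f → (∀ p, 0 ≤ f p) →
      (∀ w₁ ∈ K, ∀ w₂ ∈ K, w₁ ≠ w₂ →
        ENNReal.ofReal (f (w₁, w₂)) ≤
            volume (accEvent K (vcell K w₁ w₂) (vcell K w₂ w₁)) ∧
          ENNReal.ofReal (f (w₁, w₂)) ≤
            volume (accEvent K (vcell K w₂ w₁) (vcell K w₁ w₂))) →
      ∀ (Φ : ℝ → ℝ),
        (∀ lam : ℝ,
          Φ lam = (volume {p : Pt × Pt | p.1 ∈ K ∧ p.2 ∈ K ∧ f p ≤ lam}).toReal) →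
        (∃ φ : ℝ → ℝ, (∀ x, 0 ≤ φ x) ∧ IntegrableOn φ (Set.Icc (0 : ℝ) 1) ∧
          ∀ lam ∈ Set.Icc (0 : ℝ) 1, Φ lam = ∫ x in (0 : ℝ)..lam, φ x) →
      ∀ (k : ℕ), 1 ≤ k → ∀ (t : ℕ), 2 ≤ t →
      procMeasure (volume.restrict K) k (t + 1)
          {ω | Accepts (grp ω.1 (extSeq ω.2) t) (extSeq ω.2 t).1 (extSeq ω.2 t).2 ∨
               Accepts (grp ω.1 (extSeq ω.2) t) (extSeq ω.2 t).2 (extSeq ω.2 t).1}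
        ≤ ENNReal.ofReal (C * (1 / t +
            ∫ lam in (0 : ℝ)..(Real.log t / t),
              t * Real.exp (-(t : ℝ) * lam) * Φ lam)) := by
  refine ⟨2, by norm_num, ?_⟩
  intro K _ hK hv f hfm hf0 hf Φ hΦ _ k hk t ht
  refine (proc_bound hK hv f hf k hk t).trans ?_
  rw [ENNReal.ofReal_mul (by norm_num), ENNReal.ofReal_ofNat]
  gcongr
  exact layer hK hv f hfm hf0 Φ hΦ t ht

end
end

section
/- There exists a universal constant c > 0 such that for every δ ∈ (0, 1/8] and every unit vector u ∈ ℝ², the circular segment J = {x ∈ 𝔹 : ⟨x, u⟩ ≥ 1 − δ} of the closed unit disk 𝔹 satisfies vol(E_𝔹(J, closure(𝔹 \ J))) ≥ c·δ⁴. That is, the probability (over two i.i.d. uniform candidates on 𝔹) that a candidate inside J is accepted under consensus voting, given that the convex hull of the group equals the complementary cap closure(𝔹 \ J), is at least a constant times δ⁴. -/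
open MeasureTheory Metric Set
open scoped RealInnerProductSpace

noncomputable section

/-- The closed unit disk in the plane. -/
def unitDisk : Set Pt := Metric.closedBall 0 1

lemma key_ineq (δ r a D t1 τ s t : ℝ) (hδ : 0 < δ) (hr : 0 ≤ r) (hrr : r ^ 2 = δ)
    (ha : δ / 4 ≤ a) (hD : δ / 4 ≤ D) (ht1 : 0 ≤ t1) (ht1' : t1 ≤ r / 4)
    (hτ : 0 ≤ τ) (hτ' : τ ≤ δ * r / 40) (hs : s ≤ 1 - δ) (hst : s ^ 2 + t ^ 2 ≤ 1) :
    (s - (1 - δ + a)) ^ 2 + (t - t1) ^ 2 ≤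
      (s - (1 - δ + a + D)) ^ 2 + (t - (t1 + τ)) ^ 2 := by
  obtain ⟨y, rfl⟩ : ∃ y, s = 1 - δ - y := ⟨1 - δ - s, by ring⟩
  have hy : 0 ≤ y := by linarith
  have h1 : t ^ 2 ≤ 2 * δ + 2 * y := by nlinarith [mul_nonneg hδ.le hy]
  have h2 : r * t ≤ (3 / 2) * δ + y := by nlinarith [sq_nonneg (r - t)]
  have hB : 0 ≤ (3 / 2) * δ + y := by positivity
  have h3 : τ * t ≤ D * (((3 / 2) * δ + y) / 10) := by
    rcases le_total t 0 with h | h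
    · have := mul_nonneg hτ (neg_nonneg.2 h)
      have : 0 ≤ D * (((3 / 2) * δ + y) / 10) := mul_nonneg (by linarith) (by positivity)
      linarith
    · calc τ * t ≤ (δ * r / 40) * t := mul_le_mul_of_nonneg_right hτ' h
        _ = (δ / 4) * (r * t / 10) := by ring
        _ ≤ (δ / 4) * (((3 / 2) * δ + y) / 10) := by gcongr
        _ ≤ _ := by gcongr
  have h4 : 0 ≤ τ * t1 := mul_nonneg hτ ht1
  have h5 : D * (((3 / 2) * δ + y) / 10) ≤ D * (y + a) := by
    apply mul_le_mul_of_nonneg_left _ (by linarith)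
    linarith
  nlinarith [sq_nonneg D, sq_nonneg τ]

lemma in_disk (δ r b t : ℝ) (hδ : 0 < δ) (hδ' : δ ≤ 1 / 8) (hrr : r ^ 2 = δ)
    (hb0 : 0 ≤ b) (hb : b ≤ 3 * δ / 4) (ht0 : 0 ≤ t) (ht : t ≤ r / 2) :
    (1 - δ + b) ^ 2 + t ^ 2 ≤ 1 := by
  have h1 : t ^ 2 ≤ (r / 2) ^ 2 := by gcongr
  have h2 : (1 - δ + b) ^ 2 ≤ (1 - δ / 4) ^ 2 := by
    apply pow_le_pow_left₀ <;> linarith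
  nlinarith

lemma box_volume (b : OrthonormalBasis (Fin 2) ℝ Pt) (p q : Fin 2 → ℝ) :
    volume {w : Pt | ∀ i, b.repr w i ∈ Icc (p i) (q i)} =
      ENNReal.ofReal (q 0 - p 0) * ENNReal.ofReal (q 1 - p 1) := by
  have h := (EuclideanSpace.volume_preserving_symm_measurableEquiv_toLp (Fin 2)).comp
    b.measurePreserving_repr
  have h2 := h.measure_preimage (s := Icc p q) measurableSet_Icc.nullMeasurableSet
  rw [Real.volume_Icc_pi, Fin.prod_univ_two] at h2
  rw [← h2]
  congr 1
  ext w
  simp [Pi.le_def, forall_and]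

lemma norm_sq_repr (b : OrthonormalBasis (Fin 2) ℝ Pt) (x : Pt) :
    ‖x‖ ^ 2 = (b.repr x 0) ^ 2 + (b.repr x 1) ^ 2 := by
  rw [← b.repr.norm_map x, EuclideanSpace.norm_sq_eq, Fin.sum_univ_two]
  simp

lemma exists_basis (u : Pt) (hu : ‖u‖ = 1) :
    ∃ b : OrthonormalBasis (Fin 2) ℝ Pt, b 0 = u := by
  have hv : Orthonormal ℝ (({0} : Set (Fin 2)).domRestrict (fun _ => u)) := by
    constructor
    · intro i; exact hu
    · intro i j hij
      exact absurd (Subsingleton.elim i j) hij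
  obtain ⟨b, hb⟩ := hv.exists_orthonormalBasis_extension_of_card_eq (by simp)
  exact ⟨b, hb 0 (by simp)⟩

/-- There is a universal constant `c > 0` such that for every
`δ ∈ (0, 1/8]` and every unit vector `u`, the circular segment
`J = {x ∈ 𝔹 : ⟪x, u⟫ ≥ 1 − δ}` of the closed unit disk `𝔹` satisfies
`vol (E_𝔹(J, closure (𝔹 \ J))) ≥ c·δ⁴`: the probability (over two i.i.d. uniform
candidates on `𝔹`) that a candidate inside `J` is accepted, given that the convex hull of
the group equals the complementary cap, is at least a constant times `δ⁴`. -/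
theorem accEvent_circularSegment_volume_ge :
    ∃ c : ℝ, 0 < c ∧
      ∀ δ : ℝ, 0 < δ → δ ≤ 1 / 8 → ∀ u : Pt, ‖u‖ = 1 →
        ENNReal.ofReal (c * δ ^ 4) ≤
          volume (accEvent unitDisk {x ∈ unitDisk | 1 - δ ≤ ⟪x, u⟫}
            (closure (unitDisk \ {x ∈ unitDisk | 1 - δ ≤ ⟪x, u⟫}))) := by
  refine ⟨1 / 10240, by norm_num, ?_⟩
  intro δ hδ hδ' u hu
  obtain ⟨b, hb⟩ := exists_basis u hu
  obtain ⟨r, hr, hrr⟩ : ∃ r : ℝ, 0 ≤ r ∧ r ^ 2 = δ :=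
    ⟨√δ, Real.sqrt_nonneg _, Real.sq_sqrt hδ.le⟩
  have hin : ∀ x : Pt, ⟪x, u⟫ = b.repr x 0 := by
    intro x
    rw [b.repr_apply_apply, hb, real_inner_comm]
  have hdisk : ∀ x : Pt, x ∈ unitDisk ↔ (b.repr x 0) ^ 2 + (b.repr x 1) ^ 2 ≤ 1 := by
    intro x
    rw [← norm_sq_repr, unitDisk, mem_closedBall_zero_iff, sq_le_one_iff₀ (norm_nonneg x)]
  have hA : closure (unitDisk \ {x ∈ unitDisk | 1 - δ ≤ ⟪x, u⟫}) ⊆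
      {x | x ∈ unitDisk ∧ ⟪x, u⟫ ≤ 1 - δ} := by
    apply closure_minimal
    · rintro x ⟨hx, hx'⟩
      refine ⟨hx, ?_⟩
      by_contra hc
      exact hx' ⟨hx, (not_le.1 hc).le⟩
    · have h1 : IsClosed {x : Pt | ⟪x, u⟫ ≤ 1 - δ} :=
        isClosed_le (by fun_prop) continuous_const
      have h2 : IsClosed unitDisk := isClosed_closedBall
      exact h2.inter h1
  set E := accEvent unitDisk {x ∈ unitDisk | 1 - δ ≤ ⟪x, u⟫}
            (closure (unitDisk \ {x ∈ unitDisk | 1 - δ ≤ ⟪x, u⟫})) with hE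
  let B1 : Set Pt := {w : Pt | ∀ i, b.repr w i ∈
    Icc ((![1 - δ + δ / 4, 0] : Fin 2 → ℝ) i) ((![1 - δ + 3 * δ / 8, r / 4] : Fin 2 → ℝ) i)}
  let B2 : Set Pt := {w : Pt | ∀ i, b.repr w i ∈
    Icc ((![δ / 4, 0] : Fin 2 → ℝ) i) ((![3 * δ / 8, δ * r / 40] : Fin 2 → ℝ) i)}
  have hmp := measurePreserving_prod_add (volume : Measure Pt) (volume : Measure Pt)
  have hsub : B1 ×ˢ B2 ⊆ (fun z : Pt × Pt => (z.1, z.1 + z.2)) ⁻¹' E := by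
    rintro ⟨w, d⟩ ⟨hw, hd⟩
    have hw0 := hw 0
    have hw1 := hw 1
    have hd0 := hd 0
    have hd1 := hd 1
    simp only [Matrix.cons_val_zero, Matrix.cons_val_one, mem_Icc] at hw0 hw1 hd0 hd1
    obtain ⟨a, ha⟩ : ∃ a, b.repr w 0 = 1 - δ + a := ⟨b.repr w 0 - (1 - δ), by ring⟩
    have hδr : δ * r / 40 ≤ r / 4 := by nlinarith
    have hwK : w ∈ unitDisk := by
      rw [hdisk, ha]
      apply in_disk δ r <;> linarith
    have hwdK : w + d ∈ unitDisk := by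
      rw [hdisk, map_add, PiLp.add_apply, PiLp.add_apply, ha, add_assoc]
      apply in_disk δ r <;> linarith
    refine ⟨hwK, hwdK, Or.inl ⟨⟨hwK, ?_⟩, ?_⟩⟩
    · rw [hin]; dsimp only; linarith
    · intro v hv
      obtain ⟨hv1, hv2⟩ := hA hv
      refine ⟨hv1, ?_⟩
      rw [hin] at hv2
      rw [hdisk] at hv1
      rw [dist_eq_norm, dist_eq_norm, ← sq_le_sq₀ (norm_nonneg _) (norm_nonneg _),
        norm_sq_repr b, norm_sq_repr b]
      simp only [map_sub, map_add, PiLp.add_apply, PiLp.sub_apply]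
      rw [ha]
      apply key_ineq δ r <;> linarith
  calc ENNReal.ofReal (1 / 10240 * δ ^ 4) = volume B1 * volume B2 := by
        rw [box_volume, box_volume, ← ENNReal.ofReal_mul (by simp; linarith),
          ← ENNReal.ofReal_mul (by simp; linarith), ← ENNReal.ofReal_mul]
        · congr 1
          simp only [Matrix.cons_val_zero, Matrix.cons_val_one]
          rw [show δ ^ 4 = δ ^ 3 * r ^ 2 by rw [hrr]; ring]
          ring
        · simp only [Matrix.cons_val_zero, Matrix.cons_val_one]
          apply mul_nonneg <;> linarith
    _ = volume (B1 ×ˢ B2) := (Measure.prod_prod _ _).symm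
    _ ≤ volume ((fun z : Pt × Pt => (z.1, z.1 + z.2)) ⁻¹' E) := measure_mono hsub
    _ ≤ volume E := by
        have h := Measure.le_map_apply hmp.aemeasurable E
        rw [hmp.map_eq] at h
        exact h

end
end
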